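/- Let G=(V,p,μ) be a weighted graph with bounded geometry with constant α>0 satisfying CD(0,n) for some positive integer n. Let u₀∈L^∞(V,μ) with ‖Γu₀‖_∞ < α/2 and let u:[0,∞)→L^∞(V,μ) be the solution of the modified heat equation with initial data u₀. Then for all 0 < T₁ < T₂ and all x,y∈V, u(T₁)(x) − u(T₂)(y) ≤ (n/2)·log(T₂/T₁) + 2·d(x,y)²/(α·(T₂−T₁)). -/

import Mathlib

/-- A weighted graph `G = (V, p, μ)`: a nonnegative kernel `p` and a positive
measure `μ` on the vertex set `V`, such that `G` is locally finite, `p` is a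
Markov kernel, and `G` is connected.  Vertices `x, y` are neighbours (`x ∼ y`)
iff `0 < p x y`. -/
structure WeightedGraph (V : Type*) where
  p : V → V → ℝ
  μ : V → ℝ
  p_nonneg : ∀ x y, 0 ≤ p x y
  μ_pos : ∀ x, 0 < μ x
  locallyFinite : ∀ x, {y | 0 < p x y}.Finite
  markov : ∀ x, HasSum (p x) 1
  connected : ∀ x y : V, ∃ n : ℕ, ∃ c : Fin (n + 1) → V,
      c 0 = x ∧ c (Fin.last n) = y ∧ ∀ i : Fin n, 0 < p (c i.castSucc) (c i.succ)

namespace WeightedGraph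

variable {V : Type*} (G : WeightedGraph V)

/-- The Laplacian `Δ f (x) = ∑_{y ∼ x} p x y * (f y - f x)`.  (Summing over all
of `V` is the same, since `p x y = 0` unless `y ∼ x`.) -/
noncomputable def lap (f : V → ℝ) (x : V) : ℝ := ∑' y, G.p x y * (f y - f x)

/-- The carré du champ `Γ f (x) = (1/2) ∑_{y ∼ x} p x y * (f y - f x)^2`. -/
noncomputable def gamma (f : V → ℝ) (x : V) : ℝ := (1 / 2) * ∑' y, G.p x y * (f y - f x) ^ 2

/-- The bilinear carré du champ
`Γ(f,g)(x) = (1/2) ∑_{y ∼ x} p x y * (f y - f x) * (g y - g x)`. -/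
noncomputable def gammaBil (f g : V → ℝ) (x : V) : ℝ :=
  (1 / 2) * ∑' y, G.p x y * (f y - f x) * (g y - g x)

/-- The iterated carré du champ `Γ₂ f = (1/2) Δ (Γ f) - Γ(f, Δ f)`. -/
noncomputable def gamma2 (f : V → ℝ) (x : V) : ℝ :=
  (1 / 2) * G.lap (G.gamma f) x - G.gammaBil f (G.lap f) x

/-- Bounded geometry with constant `α > 0`: the uniform ellipticity condition (A1)
`p x y ≥ α` whenever `x ∼ y`, and the reversibility condition (A2)
`p x y * μ x = p y x * μ y`. -/
def BoundedGeometry (α : ℝ) : Prop :=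
  0 < α ∧ (∀ x y, 0 < G.p x y → α ≤ G.p x y) ∧ ∀ x y, G.p x y * G.μ x = G.p y x * G.μ y

/-- The Bakry–Émery curvature-dimension condition `CD(K, n)`:
`Γ₂ f ≥ (1/n) (Δ f)² + K Γ f`. -/
def CD (K : ℝ) (n : ℕ) : Prop :=
  ∀ f : V → ℝ, ∀ x : V, (1 / (n : ℝ)) * G.lap f x ^ 2 + K * G.gamma f x ≤ G.gamma2 f x

/-- The Bakry–Émery curvature-dimension condition `CD(K, ∞)`: `Γ₂ f ≥ K Γ f`. -/
def CDInfty (K : ℝ) : Prop :=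
  ∀ f : V → ℝ, ∀ x : V, K * G.gamma f x ≤ G.gamma2 f x

/-- The graph distance `d(x,y)`: the least length of a path of consecutive
neighbours joining `x` to `y` (and `0` if `x = y`). -/
noncomputable def dist (x y : V) : ℕ :=
  sInf {n : ℕ | ∃ c : Fin (n + 1) → V,
    c 0 = x ∧ c (Fin.last n) = y ∧ ∀ i : Fin n, 0 < G.p (c i.castSucc) (c i.succ)}

/-- The measure `μ(B(x,r)) = ∑_{y : d(x,y) ≤ r} μ y` of the closed ball `B(x,r)`. -/
noncomputable def ballMeasure (x : V) (r : ℝ) : ℝ :=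
  ∑' y : {y : V // (G.dist x y : ℝ) ≤ r}, G.μ y

end WeightedGraph

/-- The sup norm `‖f‖_∞ = sup_x |f x|` of a (bounded) function on `V`. -/
noncomputable def supNorm {V : Type*} (f : V → ℝ) : ℝ := ⨆ x, |f x|

/-- The space `L^∞(V, μ)` of bounded functions on `V`, with the sup norm
`‖f‖_∞ = sup_x |f x|`. -/
noncomputable abbrev Linf (V : Type*) := lp (fun _ : V => ℝ) ⊤

/-- `u : [0,∞) → L^∞(V,μ)` is a solution of the modified heat equation
`∂ₜ u = Δ u + Γ u` with initial data `u₀` and derivative `u'`: `u` is continuous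
on `[0,∞)`, differentiable on `(0,∞)` with derivative `u'` continuous there,
`u 0 = u₀`, and `u' t = Δ (u t) + Γ (u t)` for all `t > 0`. -/
structure IsMHESolution {V : Type*} (G : WeightedGraph V) (u u' : ℝ → Linf V)
    (u₀ : Linf V) : Prop where
  init : u 0 = u₀
  cont : ContinuousOn u (Set.Ici 0)
  derivCont : ContinuousOn u' (Set.Ioi 0)
  hasDeriv : ∀ t > (0 : ℝ), HasDerivAt u (u' t) t
  eqn : ∀ t > (0 : ℝ), ∀ x : V, u' t x = G.lap (fun y => u t y) x + G.gamma (fun y => u t y) x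

/-! `CD(0,n)` makes `Γu` a subsolution and `Δu` a supersolution, up to a term `(2/n)(Δu)²`, of the
linearised equation `∂ₜf = Δf + 2Γ(u,f)`.  The weights `p x y * (1 + (u y - u x))` of the operator
on the right are nonnegative as long as `Γu ≤ α/2`, so a maximum principle propagates
`Γu ≤ ‖Γu₀‖_∞ < α/2` in time, and then gives the Li–Yau estimate `-Δu ≤ n/(2t)`.

Hence `v = u + (n/2) log t` satisfies `∂ₜv ≥ Γv`.  Along an edge `x ∼ y` this is the Riccati
inequality `∂ₜv(x) ≥ (α/2)(v(x) - v(y))²`, while `v(y)` is nondecreasing; since `v(x)` does not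
blow up on `[a,b]`, it follows that `v(a,x) - v(b,y) ≤ 2/(α(b-a))`.  Crossing the edges of a
geodesic from `x` to `y` at equidistant times gives the inequality. -/

open Set Filter Topology

section Real

/-- Unlike in `image_le_of_deriv_right_lt_deriv_boundary'`, nothing is differentiated at `a`. -/
theorem le_of_hasDerivAt_lt_of_eq {f f' B B' : ℝ → ℝ} {a b : ℝ}
    (hf : ContinuousOn f (Icc a b)) (hf' : ∀ t ∈ Ioo a b, HasDerivAt f (f' t) t)
    (hB : ContinuousOn B (Icc a b)) (hB' : ∀ t ∈ Ioo a b, HasDerivAt B (B' t) t)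
    (ha : f a < B a) (hlt : ∀ t ∈ Ioo a b, f t = B t → f' t < B' t) :
    ∀ t ∈ Icc a b, f t ≤ B t := by
  intro t ht
  rcases ht.1.eq_or_lt with rfl | hat
  · exact ha.le
  have hab : a < b := hat.trans_le ht.2
  have hnear : ∀ᶠ s in 𝓝[>] a, f s < B s := by
    have hleft : a ∈ Icc a b := left_mem_Icc.2 hab.le
    rw [← nhdsWithin_Ioo_eq_nhdsGT hab]
    exact ((hf a hleft).eventually_lt (hB a hleft) ha).filter_mono
      (nhdsWithin_mono a Ioo_subset_Icc_self)
  obtain ⟨s, hfs, has, hst⟩ := (hnear.and (Ioo_mem_nhdsGT hat)).exists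
  have hsub : Icc s b ⊆ Icc a b := Icc_subset_Icc_left has.le
  have hsub' : Ico s b ⊆ Ioo a b := fun r hr => ⟨has.trans_le hr.1, hr.2⟩
  exact image_le_of_deriv_right_lt_deriv_boundary' (hf.mono hsub)
    (fun r hr => (hf' r (hsub' hr)).hasDerivWithinAt) hfs.le (hB.mono hsub)
    (fun r hr => (hB' r (hsub' hr)).hasDerivWithinAt) (fun r hr => hlt r (hsub' hr))
    ⟨hst.le, ht.2⟩

theorem monotoneOn_Icc_of_hasDerivAt_nonneg {f f' : ℝ → ℝ} {a b : ℝ}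
    (hf : ∀ t ∈ Icc a b, HasDerivAt f (f' t) t) (hf' : ∀ t ∈ Icc a b, 0 ≤ f' t) :
    MonotoneOn f (Icc a b) :=
  monotoneOn_of_hasDerivWithinAt_nonneg (convex_Icc a b)
    (fun t ht => (hf t ht).continuousAt.continuousWithinAt)
    (fun t ht => (hf t (interior_subset ht)).hasDerivWithinAt)
    (fun t ht => hf' t (interior_subset ht))

theorem le_one_div_of_mul_sq_le_deriv {w w' : ℝ → ℝ} {c a b : ℝ} (hc : 0 < c) (hab : a < b)
    (hw : ∀ t ∈ Icc a b, HasDerivAt w (w' t) t) (hpos : ∀ t ∈ Icc a b, 0 < w t)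
    (hw' : ∀ t ∈ Icc a b, c * w t ^ 2 ≤ w' t) :
    w a ≤ 1 / (c * (b - a)) := by
  have hderiv : ∀ t ∈ Icc a b,
      HasDerivAt (fun s => -(w s)⁻¹ - c * s) (w' t / w t ^ 2 - c) t := fun t ht =>
    (((hw t ht).fun_inv (hpos t ht).ne').fun_neg.fun_sub
      ((hasDerivAt_id t).const_mul c)).congr_deriv (by ring)
  have hmono := monotoneOn_Icc_of_hasDerivAt_nonneg hderiv fun t ht =>
    sub_nonneg.2 ((le_div_iff₀ (pow_pos (hpos t ht) 2)).2 (hw' t ht))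
  have hinv : -(w a)⁻¹ - c * a ≤ -(w b)⁻¹ - c * b :=
    hmono (left_mem_Icc.2 hab.le) (right_mem_Icc.2 hab.le) hab.le
  have hwb : 0 < (w b)⁻¹ := inv_pos.2 (hpos b (right_mem_Icc.2 hab.le))
  rw [one_div]
  refine le_inv_of_le_inv₀ (mul_pos hc (sub_pos.2 hab)) ?_
  linarith

theorem sub_le_one_div_of_mul_sq_sub_le_deriv {g g' h : ℝ → ℝ} {c a b : ℝ} (hc : 0 < c)
    (hab : a < b) (hg : ∀ t ∈ Icc a b, HasDerivAt g (g' t) t) (hh : MonotoneOn h (Icc a b))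
    (hg' : ∀ t ∈ Icc a b, c * (g t - h t) ^ 2 ≤ g' t) :
    g a - h b ≤ 1 / (c * (b - a)) := by
  have ha : a ∈ Icc a b := left_mem_Icc.2 hab.le
  have hb : b ∈ Icc a b := right_mem_Icc.2 hab.le
  rcases le_or_gt (g a - h b) 0 with hle | hgt
  · exact hle.trans (one_div_nonneg.2 (mul_pos hc (sub_pos.2 hab)).le)
  have hgmono : MonotoneOn g (Icc a b) :=
    monotoneOn_Icc_of_hasDerivAt_nonneg hg fun t ht =>
      (mul_nonneg hc.le (sq_nonneg _)).trans (hg' t ht)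
  have hpos : ∀ t ∈ Icc a b, 0 < g t - h b := fun t ht =>
    hgt.trans_le (sub_le_sub_right (hgmono ha ht ht.1) _)
  refine le_one_div_of_mul_sq_le_deriv (w := fun t => g t - h b) hc hab
    (fun t ht => (hg t ht).sub_const _) hpos fun t ht => ?_
  refine (mul_le_mul_of_nonneg_left ?_ hc.le).trans (hg' t ht)
  exact pow_le_pow_left₀ (hpos t ht).le (sub_le_sub_left (hh ht hb ht.2) _) 2

theorem le_half_mul_exp_of_le_mul_exp {ι : Type*} {f f' : ℝ → ι → ℝ} {a b C S : ℝ}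
    (hC : 0 < C) (hS : 0 < S) (hcont : ∀ x, ContinuousOn (fun t => f t x) (Icc a b))
    (hderiv : ∀ t ∈ Ioo a b, ∀ x, HasDerivAt (fun s => f s x) (f' t x) t) (ha : ∀ x, f a x ≤ 0)
    (hle : ∀ t ∈ Ioo a b, ∀ x, 0 < f t x → ∀ M, (∀ y, f t y ≤ M) → f' t x ≤ C * M)
    (hfS : ∀ t ∈ Icc a b, ∀ x, f t x ≤ S * Real.exp (3 * C * (t - a))) :
    ∀ t ∈ Icc a b, ∀ x, f t x ≤ S / 2 * Real.exp (3 * C * (t - a)) := by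
  intro t ht x
  set E : ℝ → ℝ := fun t => Real.exp (3 * C * (t - a)) with hE
  have hE0 : ∀ t, 0 < E t := fun t => Real.exp_pos _
  have hbarrier : ∀ t, HasDerivAt (fun s => S / 2 * E s) (S / 2 * (3 * C * E t)) t := fun t =>
    (((((hasDerivAt_id t).sub_const a).const_mul (3 * C)).exp).congr_deriv
      (by simp [hE, mul_comm])).const_mul (S / 2)
  refine le_of_hasDerivAt_lt_of_eq (hcont x) (fun s hs => hderiv s hs x)
    (fun s _ => (hbarrier s).continuousAt.continuousWithinAt) (fun s _ => hbarrier s)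
    ((ha x).trans_lt (mul_pos (half_pos hS) (hE0 a))) (fun s hs heq => ?_) t ht
  have hf' : f' s x ≤ C * (S * E s) :=
    hle s hs x (heq ▸ mul_pos (half_pos hS) (hE0 s)) _ (hfS s (Ioo_subset_Icc_self hs))
  have : 0 < C * (S * E s) := mul_pos hC (mul_pos hS (hE0 s))
  linarith

-- If positive, the supremum `S` of `f t x / exp (3 * C * (t - a))` would satisfy `S ≤ S / 2`.
theorem nonpos_of_deriv_le_mul_upperBound {ι : Type*} {f f' : ℝ → ι → ℝ} {a b C B : ℝ}
    (hC : 0 < C) (hcont : ∀ x, ContinuousOn (fun t => f t x) (Icc a b))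
    (hderiv : ∀ t ∈ Ioo a b, ∀ x, HasDerivAt (fun s => f s x) (f' t x) t)
    (hB : ∀ t ∈ Icc a b, ∀ x, f t x ≤ B) (ha : ∀ x, f a x ≤ 0)
    (hle : ∀ t ∈ Ioo a b, ∀ x, 0 < f t x → ∀ M, (∀ y, f t y ≤ M) → f' t x ≤ C * M) :
    ∀ t ∈ Icc a b, ∀ x, f t x ≤ 0 := by
  intro t₀ ht₀ x₀
  by_contra! hpos
  let E : ℝ → ℝ := fun t => Real.exp (3 * C * (t - a))
  have hE0 : ∀ t, 0 < E t := fun t => Real.exp_pos _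
  have hE1 : ∀ t ∈ Icc a b, 1 ≤ E t := fun t ht =>
    Real.one_le_exp (mul_nonneg (by positivity) (sub_nonneg.2 ht.1))
  let F : Icc a b × ι → ℝ := fun q => f q.1 q.2 / E q.1
  have hF : BddAbove (range F) := by
    refine ⟨max B 0, ?_⟩
    rintro _ ⟨⟨t, x⟩, rfl⟩
    refine (div_le_iff₀ (hE0 t)).2 ?_
    exact ((hB t t.2 x).trans (le_max_left B 0)).trans
      (le_mul_of_one_le_right (le_max_right B 0) (hE1 t t.2))
  let S : ℝ := ⨆ q, F q
  have hS : 0 < S := (div_pos hpos (hE0 t₀)).trans_le (le_ciSup hF (⟨t₀, ht₀⟩, x₀))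
  have hhalf : ∀ t ∈ Icc a b, ∀ x, f t x ≤ S / 2 * E t :=
    le_half_mul_exp_of_le_mul_exp hC hS hcont hderiv ha hle fun t ht x =>
      (div_le_iff₀ (hE0 t)).1 (le_ciSup hF (⟨t, ht⟩, x))
  have : Nonempty (Icc a b × ι) := ⟨(⟨t₀, ht₀⟩, x₀)⟩
  have hSle : S ≤ S / 2 := ciSup_le fun q => (div_le_iff₀ (hE0 q.1)).2 (hhalf q.1 q.1.2 q.2)
  linarith

end Real

theorem abs_apply_sub_apply_le_two_mul_norm {V : Type*} (f : Linf V) (x y : V) :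
    |f y - f x| ≤ 2 * ‖f‖ := by
  have hx := lp.norm_apply_le_norm ENNReal.top_ne_zero f x
  have hy := lp.norm_apply_le_norm ENNReal.top_ne_zero f y
  rw [Real.norm_eq_abs] at hx hy
  linarith [abs_sub (f y) (f x)]

namespace WeightedGraph

variable {V : Type*} (G : WeightedGraph V)

/-- The neighbours of `x` as a finite set, over which the sums defining `Δ` and `Γ` range. -/
noncomputable def neighborFinset (x : V) : Finset V := (G.locallyFinite x).toFinset

/-- The linearisation `f ↦ Δ f + 2 Γ(u, f)` of `f ↦ Δ f + Γ f` at `u`. -/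
noncomputable def driftLap (u f : V → ℝ) (x : V) : ℝ := G.lap f x + 2 * G.gammaBil u f x

variable {G} in
@[simp]
theorem mem_neighborFinset {x y : V} : y ∈ G.neighborFinset x ↔ 0 < G.p x y := by
  simp [neighborFinset]

variable {G} in
theorem p_eq_zero_of_notMem_neighborFinset {x y : V} (h : y ∉ G.neighborFinset x) :
    G.p x y = 0 :=
  le_antisymm (not_lt.1 (mt mem_neighborFinset.2 h)) (G.p_nonneg x y)

theorem sum_p_eq_one (x : V) : ∑ y ∈ G.neighborFinset x, G.p x y = 1 :=
  (hasSum_sum_of_ne_finset_zero fun _ hy => p_eq_zero_of_notMem_neighborFinset hy).unique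
    (G.markov x)

theorem sum_p_mul_le {F : V → ℝ} {x : V} {c : ℝ} (h : ∀ y, 0 < G.p x y → F y ≤ c) :
    ∑ y ∈ G.neighborFinset x, G.p x y * F y ≤ c :=
  calc ∑ y ∈ G.neighborFinset x, G.p x y * F y
      ≤ ∑ y ∈ G.neighborFinset x, G.p x y * c := Finset.sum_le_sum fun y hy =>
        mul_le_mul_of_nonneg_left (h y (mem_neighborFinset.1 hy)) (G.p_nonneg x y)
    _ = c := by rw [← Finset.sum_mul, sum_p_eq_one, one_mul]

theorem lap_eq_sum (f : V → ℝ) (x : V) :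
    G.lap f x = ∑ y ∈ G.neighborFinset x, G.p x y * (f y - f x) :=
  tsum_eq_sum fun y hy => by rw [p_eq_zero_of_notMem_neighborFinset hy, zero_mul]

theorem gamma_eq_sum (f : V → ℝ) (x : V) :
    G.gamma f x = (1 / 2) * ∑ y ∈ G.neighborFinset x, G.p x y * (f y - f x) ^ 2 := by
  rw [gamma, tsum_eq_sum fun y hy => by rw [p_eq_zero_of_notMem_neighborFinset hy, zero_mul]]

theorem gammaBil_eq_sum (f g : V → ℝ) (x : V) :
    G.gammaBil f g x =
      (1 / 2) * ∑ y ∈ G.neighborFinset x, G.p x y * (f y - f x) * (g y - g x) := by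
  rw [gammaBil, tsum_eq_sum fun y hy => by
    rw [p_eq_zero_of_notMem_neighborFinset hy, zero_mul, zero_mul]]

theorem lap_add (f g : V → ℝ) (x : V) : G.lap (f + g) x = G.lap f x + G.lap g x := by
  simp only [lap_eq_sum, ← Finset.sum_add_distrib, Pi.add_apply]
  exact Finset.sum_congr rfl fun y _ => by ring

theorem gammaBil_add_right (u f g : V → ℝ) (x : V) :
    G.gammaBil u (f + g) x = G.gammaBil u f x + G.gammaBil u g x := by
  simp only [gammaBil_eq_sum, ← mul_add, ← Finset.sum_add_distrib, Pi.add_apply]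
  congr 1
  exact Finset.sum_congr rfl fun y _ => by ring

theorem gamma_add_const (f : V → ℝ) (c : ℝ) (x : V) :
    G.gamma (fun y => f y + c) x = G.gamma f x := by
  simp only [gamma, add_sub_add_right_eq_sub]

theorem gamma_nonneg (f : V → ℝ) (x : V) : 0 ≤ G.gamma f x :=
  mul_nonneg one_half_pos.le (tsum_nonneg fun y => mul_nonneg (G.p_nonneg x y) (sq_nonneg _))

theorem driftLap_eq_sum (u f : V → ℝ) (x : V) :
    G.driftLap u f x =
      ∑ y ∈ G.neighborFinset x, G.p x y * ((1 + (u y - u x)) * (f y - f x)) := by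
  rw [driftLap, lap_eq_sum, gammaBil_eq_sum, ← mul_assoc, mul_one_div_cancel two_ne_zero, one_mul,
    ← Finset.sum_add_distrib]
  exact Finset.sum_congr rfl fun y _ => by ring

theorem driftLap_const_mul (u f : V → ℝ) (c : ℝ) (x : V) :
    G.driftLap u (fun y => c * f y) x = c * G.driftLap u f x := by
  simp only [driftLap_eq_sum, Finset.mul_sum]
  exact Finset.sum_congr rfl fun y _ => by ring

theorem driftLap_le {u f : V → ℝ} {x : V} {S : ℝ} (hu : ∀ y, 0 < G.p x y → |u y - u x| ≤ 1)
    (hf : ∀ y, f y ≤ S) : G.driftLap u f x ≤ 2 * (S - f x) := by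
  rw [driftLap_eq_sum]
  refine G.sum_p_mul_le fun y hy => ?_
  obtain ⟨hlower, hupper⟩ := abs_le.1 (hu y hy)
  calc (1 + (u y - u x)) * (f y - f x)
      ≤ (1 + (u y - u x)) * (S - f x) :=
        mul_le_mul_of_nonneg_left (sub_le_sub_right (hf y) _) (by linarith)
    _ ≤ 2 * (S - f x) := mul_le_mul_of_nonneg_right (by linarith) (sub_nonneg.2 (hf x))

section UniformlyElliptic

variable {α : ℝ} {G}

theorem half_mul_sq_sub_le_gamma (hp : ∀ x y, 0 < G.p x y → α ≤ G.p x y) (f : V → ℝ) {x y : V}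
    (hxy : 0 < G.p x y) : α / 2 * (f y - f x) ^ 2 ≤ G.gamma f x := by
  have hterm : G.p x y * (f y - f x) ^ 2
      ≤ ∑ z ∈ G.neighborFinset x, G.p x z * (f z - f x) ^ 2 :=
    Finset.single_le_sum (f := fun z => G.p x z * (f z - f x) ^ 2)
      (fun z _ => mul_nonneg (G.p_nonneg x z) (sq_nonneg _)) (mem_neighborFinset.2 hxy)
  have hα := mul_le_mul_of_nonneg_right (hp x y hxy) (sq_nonneg (f y - f x))
  rw [gamma_eq_sum]
  linarith

theorem abs_sub_le_one_of_gamma_le (hα : 0 < α) (hp : ∀ x y, 0 < G.p x y → α ≤ G.p x y)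
    {f : V → ℝ} {x : V} (hx : G.gamma f x ≤ α / 2) (y : V) (hxy : 0 < G.p x y) :
    |f y - f x| ≤ 1 := by
  rw [← sq_le_one_iff_abs_le_one]
  refine le_of_mul_le_mul_left ?_ (half_pos hα)
  rw [mul_one]
  exact (half_mul_sq_sub_le_gamma hp f hxy).trans hx

end UniformlyElliptic

theorem neg_lap_le_two_mul_norm (f : Linf V) (x : V) : -G.lap f x ≤ 2 * ‖f‖ := by
  rw [lap_eq_sum, ← Finset.sum_neg_distrib]
  simp only [← mul_neg]
  exact G.sum_p_mul_le fun y _ => (neg_le_abs _).trans (abs_apply_sub_apply_le_two_mul_norm f x y)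

theorem gamma_sub_gamma_le (f g : Linf V) (x : V) :
    G.gamma f x - G.gamma g x ≤ 2 * ‖f - g‖ * ‖f + g‖ := by
  have hsum : ∑ y ∈ G.neighborFinset x, G.p x y * ((f y - f x) ^ 2 - (g y - g x) ^ 2)
      ≤ (2 * ‖f - g‖) * (2 * ‖f + g‖) := G.sum_p_mul_le fun y _ =>
    calc (f y - f x) ^ 2 - (g y - g x) ^ 2
        = ((f - g) y - (f - g) x) * ((f + g) y - (f + g) x) := by
          simp only [lp.coeFn_sub, lp.coeFn_add, Pi.sub_apply, Pi.add_apply]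
          ring
      _ ≤ |(f - g) y - (f - g) x| * |(f + g) y - (f + g) x| :=
          (le_abs_self _).trans (abs_mul _ _).le
      _ ≤ (2 * ‖f - g‖) * (2 * ‖f + g‖) := by
          gcongr <;> exact abs_apply_sub_apply_le_two_mul_norm _ x y
  simp only [mul_sub, Finset.sum_sub_distrib] at hsum
  rw [gamma_eq_sum, gamma_eq_sum]
  linarith

theorem gamma_le_two_mul_norm_sq (f : Linf V) (x : V) : G.gamma f x ≤ 2 * ‖f‖ ^ 2 := by
  have h := G.gamma_sub_gamma_le f 0 x
  have hzero : G.gamma (0 : Linf V) x = 0 := by simp [gamma]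
  rw [hzero, sub_zero, sub_zero, add_zero] at h
  linarith

theorem gamma_le_supNorm (f : Linf V) (x : V) : G.gamma f x ≤ supNorm (G.gamma f) := by
  refine (le_abs_self _).trans (le_ciSup (f := fun y => |G.gamma f y|) ⟨2 * ‖f‖ ^ 2, ?_⟩ x)
  rintro _ ⟨y, rfl⟩
  exact (abs_of_nonneg (G.gamma_nonneg f y)).trans_le (G.gamma_le_two_mul_norm_sq f y)

theorem continuousOn_lap {X : Type*} [TopologicalSpace X] {v : X → V → ℝ} {s : Set X}
    (hv : ∀ y, ContinuousOn (fun t => v t y) s) (x : V) :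
    ContinuousOn (fun t => G.lap (v t) x) s := by
  simp only [lap_eq_sum]
  exact continuousOn_finsetSum _ fun y _ => continuousOn_const.mul ((hv y).sub (hv x))

theorem continuousOn_gamma {X : Type*} [TopologicalSpace X] {v : X → V → ℝ} {s : Set X}
    (hv : ∀ y, ContinuousOn (fun t => v t y) s) (x : V) :
    ContinuousOn (fun t => G.gamma (v t) x) s := by
  simp only [gamma_eq_sum]
  exact continuousOn_const.mul
    (continuousOn_finsetSum _ fun y _ => continuousOn_const.mul (((hv y).sub (hv x)).pow 2))

theorem hasDerivAt_lap {v : ℝ → V → ℝ} {v' : V → ℝ} {t : ℝ}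
    (hv : ∀ y, HasDerivAt (fun s => v s y) (v' y) t) (x : V) :
    HasDerivAt (fun s => G.lap (v s) x) (G.lap v' x) t := by
  simp only [lap_eq_sum]
  exact HasDerivAt.fun_sum fun y _ => ((hv y).sub (hv x)).const_mul _

theorem hasDerivAt_gamma {v : ℝ → V → ℝ} {v' : V → ℝ} {t : ℝ}
    (hv : ∀ y, HasDerivAt (fun s => v s y) (v' y) t) (x : V) :
    HasDerivAt (fun s => G.gamma (v s) x) (2 * G.gammaBil (v t) v' x) t := by
  simp only [gamma_eq_sum, gammaBil_eq_sum]
  refine ((HasDerivAt.fun_sum fun y _ =>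
    (((hv y).fun_sub (hv x)).fun_pow 2).const_mul (G.p x y)).const_mul (1 / 2 : ℝ)).congr_deriv ?_
  rw [← mul_assoc, Finset.mul_sum, Finset.mul_sum]
  exact Finset.sum_congr rfl fun y _ => by norm_num; ring

variable {G} in
theorem CD.cdInfty {K : ℝ} {n : ℕ} (h : G.CD K n) : G.CDInfty K := fun f x =>
  (le_add_of_nonneg_left (by positivity)).trans (h f x)

variable {G} in
theorem CDInfty.two_mul_gammaBil_lap_add_gamma_le (h : G.CDInfty 0) (f : V → ℝ) (x : V) :
    2 * G.gammaBil f (G.lap f + G.gamma f) x ≤ G.driftLap f (G.gamma f) x := by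
  have hf := h f x
  rw [gamma2] at hf
  rw [gammaBil_add_right, driftLap]
  linarith

variable {G} in
theorem CD.driftLap_lap_add_sq_le {n : ℕ} (h : G.CD 0 n) (f : V → ℝ) (x : V) :
    G.driftLap f (G.lap f) x + 2 / n * G.lap f x ^ 2 ≤ G.lap (G.lap f + G.gamma f) x := by
  have hf := h f x
  rw [gamma2, one_div] at hf
  rw [lap_add, driftLap, div_eq_mul_inv, mul_assoc 2]
  linarith

theorem exists_path_length_eq_dist (x y : V) :
    ∃ c : ℕ → V, c 0 = x ∧ c (G.dist x y) = y ∧ ∀ i < G.dist x y, 0 < G.p (c i) (c (i + 1)) := by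
  obtain ⟨c, hc0, hclast, hc⟩ : G.dist x y ∈ {n : ℕ | ∃ c : Fin (n + 1) → V,
      c 0 = x ∧ c (Fin.last n) = y ∧ ∀ i : Fin n, 0 < G.p (c i.castSucc) (c i.succ)} :=
    Nat.sInf_mem (G.connected x y)
  have hofNat : ∀ i (hi : i < G.dist x y + 1), Fin.ofNat (G.dist x y + 1) i = ⟨i, hi⟩ :=
    fun i hi => Fin.ext (Nat.mod_eq_of_lt hi)
  refine ⟨fun i => c (Fin.ofNat _ i), hc0, ?_, fun i hi => ?_⟩
  · simp only [hofNat _ (Nat.lt_succ_self _)]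
    exact hclast
  · simp only [hofNat i (by omega), hofNat (i + 1) (by omega)]
    exact hc ⟨i, hi⟩

section GammaLeDeriv

variable {G} {α T₁ T₂ : ℝ} {v v' : ℝ → V → ℝ}

theorem monotoneOn_of_gamma_le_deriv
    (hv : ∀ t ∈ Icc T₁ T₂, ∀ x, HasDerivAt (fun s => v s x) (v' t x) t)
    (hΓ : ∀ t ∈ Icc T₁ T₂, ∀ x, G.gamma (v t) x ≤ v' t x) (x : V) :
    MonotoneOn (fun t => v t x) (Icc T₁ T₂) :=
  monotoneOn_Icc_of_hasDerivAt_nonneg (fun t ht => hv t ht x) fun t ht =>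
    (G.gamma_nonneg _ x).trans (hΓ t ht x)

theorem sub_le_of_gamma_le_deriv_of_adj (hα : 0 < α) (hp : ∀ x y, 0 < G.p x y → α ≤ G.p x y)
    (hT : T₁ < T₂) (hv : ∀ t ∈ Icc T₁ T₂, ∀ x, HasDerivAt (fun s => v s x) (v' t x) t)
    (hΓ : ∀ t ∈ Icc T₁ T₂, ∀ x, G.gamma (v t) x ≤ v' t x) {x y : V} (hxy : 0 < G.p x y) :
    v T₁ x - v T₂ y ≤ 2 / (α * (T₂ - T₁)) :=
  calc v T₁ x - v T₂ y
      ≤ 1 / (α / 2 * (T₂ - T₁)) :=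
        sub_le_one_div_of_mul_sq_sub_le_deriv (half_pos hα) hT (fun t ht => hv t ht x)
          (monotoneOn_of_gamma_le_deriv hv hΓ y) fun t ht => by
            rw [sub_sq_comm]
            exact (half_mul_sq_sub_le_gamma hp (v t) hxy).trans (hΓ t ht x)
    _ = 2 / (α * (T₂ - T₁)) := by rw [div_mul_eq_mul_div, one_div_div]

theorem sub_le_of_gamma_le_deriv_of_path (hα : 0 < α)
    (hp : ∀ x y, 0 < G.p x y → α ≤ G.p x y) (hT : T₁ < T₂)
    (hv : ∀ t ∈ Icc T₁ T₂, ∀ x, HasDerivAt (fun s => v s x) (v' t x) t)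
    (hΓ : ∀ t ∈ Icc T₁ T₂, ∀ x, G.gamma (v t) x ≤ v' t x) {c : ℕ → V} {k : ℕ} (hk : 0 < k)
    (hc : ∀ i < k, 0 < G.p (c i) (c (i + 1))) :
    v T₁ (c 0) - v T₂ (c k) ≤ 2 * (k : ℝ) ^ 2 / (α * (T₂ - T₁)) := by
  have hk0 : (0 : ℝ) < k := Nat.cast_pos.2 hk
  set τ : ℝ := (T₂ - T₁) / k with hτ
  have hτ0 : 0 < τ := div_pos (sub_pos.2 hT) hk0
  have hkτ : k * τ = T₂ - T₁ := mul_div_cancel₀ _ hk0.ne'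
  let s : ℕ → ℝ := fun i => T₁ + i * τ
  have hstep : ∀ i, s (i + 1) - s i = τ := fun i => by simp only [s]; push_cast; ring
  have hs : Monotone s := monotone_nat_of_le_succ fun i => by linarith [hstep i]
  have hs0 : s 0 = T₁ := by simp [s]
  have hsk : s k = T₂ := by simp [s, hkτ]
  have hedge : ∀ i ∈ Finset.range k,
      v (s i) (c i) - v (s (i + 1)) (c (i + 1)) ≤ 2 / (α * τ) := fun i hi => by
    have hik : i < k := Finset.mem_range.1 hi
    have hsub : Icc (s i) (s (i + 1)) ⊆ Icc T₁ T₂ :=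
      Icc_subset_Icc (hs0 ▸ hs i.zero_le) (hsk ▸ hs hik)
    rw [← hstep i]
    exact sub_le_of_gamma_le_deriv_of_adj hα hp (by linarith [hstep i])
      (fun t ht => hv t (hsub ht)) (fun t ht => hΓ t (hsub ht)) (hc i hik)
  calc v T₁ (c 0) - v T₂ (c k)
      = ∑ i ∈ Finset.range k, (v (s i) (c i) - v (s (i + 1)) (c (i + 1))) := by
        rw [Finset.sum_range_sub' (fun i => v (s i) (c i)), hs0, hsk]
    _ ≤ k • (2 / (α * τ)) := by simpa using Finset.sum_le_card_nsmul _ _ _ hedge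
    _ = 2 * (k : ℝ) ^ 2 / (α * (T₂ - T₁)) := by rw [nsmul_eq_mul, hτ]; field_simp

theorem sub_le_of_gamma_le_deriv (hα : 0 < α) (hp : ∀ x y, 0 < G.p x y → α ≤ G.p x y)
    (hT : T₁ < T₂) (hv : ∀ t ∈ Icc T₁ T₂, ∀ x, HasDerivAt (fun s => v s x) (v' t x) t)
    (hΓ : ∀ t ∈ Icc T₁ T₂, ∀ x, G.gamma (v t) x ≤ v' t x) (x y : V) :
    v T₁ x - v T₂ y ≤ 2 * (G.dist x y : ℝ) ^ 2 / (α * (T₂ - T₁)) := by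
  obtain ⟨c, hc0, hclast, hc⟩ := G.exists_path_length_eq_dist x y
  rcases (G.dist x y).eq_zero_or_pos with hzero | hpos
  · obtain rfl : x = y := by rw [← hc0, ← hclast, hzero]
    have hmono : v T₁ x ≤ v T₂ x := monotoneOn_of_gamma_le_deriv hv hΓ x
      (left_mem_Icc.2 hT.le) (right_mem_Icc.2 hT.le) hT.le
    simpa [hzero] using hmono
  · have hpath := sub_le_of_gamma_le_deriv_of_path hα hp hT hv hΓ hpos hc
    rwa [hc0, hclast] at hpath

end GammaLeDeriv

end WeightedGraph

namespace IsMHESolution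

variable {V : Type*} {G : WeightedGraph V} {u u' : ℝ → Linf V} {u₀ : Linf V} {α : ℝ} {n : ℕ}

theorem continuousOn_apply (hu : IsMHESolution G u u' u₀) (x : V) :
    ContinuousOn (fun t => u t x) (Ici 0) :=
  (lp.evalCLM ℝ (fun _ : V => ℝ) ⊤ x).continuous.comp_continuousOn hu.cont

theorem hasDerivAt_apply (hu : IsMHESolution G u u' u₀) {t : ℝ} (ht : 0 < t) (x : V) :
    HasDerivAt (fun s => u s x) (u' t x) t :=
  (lp.evalCLM ℝ (fun _ : V => ℝ) ⊤ x).hasFDerivAt.comp_hasDerivAt t (hu.hasDeriv t ht)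

theorem coe_deriv_eq (hu : IsMHESolution G u u' u₀) {t : ℝ} (ht : 0 < t) :
    ⇑(u' t) = G.lap (u t) + G.gamma (u t) :=
  funext (hu.eqn t ht)

theorem exists_norm_le (hu : IsMHESolution G u u' u₀) (b : ℝ) :
    ∃ M, ∀ t ∈ Icc 0 b, ‖u t‖ ≤ M :=
  isCompact_Icc.exists_bound_of_continuousOn (hu.cont.mono Icc_subset_Ici_self)

theorem eventually_gamma_le (hu : IsMHESolution G u u' u₀) {s β γ : ℝ} (hs : 0 ≤ s) (hβγ : β < γ)
    (hβ : ∀ x, G.gamma (u s) x ≤ β) : ∀ᶠ t in 𝓝[≥] s, ∀ x, G.gamma (u t) x ≤ γ := by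
  have hcont : ContinuousWithinAt u (Ici s) s := (hu.cont s hs).mono (Ici_subset_Ici.2 hs)
  have hlim : Tendsto (fun t => 2 * ‖u t - u s‖ * ‖u t + u s‖) (𝓝[≥] s)
      (𝓝 (2 * ‖u s - u s‖ * ‖u s + u s‖)) :=
    ((hcont.sub continuousWithinAt_const).norm.const_mul 2).mul
      (hcont.add continuousWithinAt_const).norm
  rw [sub_self, norm_zero, mul_zero, zero_mul] at hlim
  filter_upwards [hlim.eventually_lt_const (sub_pos.2 hβγ)] with t ht x
  linarith [G.gamma_sub_gamma_le (u t) (u s) x, hβ x]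

theorem gamma_le_of_gamma_le_half (hu : IsMHESolution G u u' u₀) (hα : 0 < α)
    (hp : ∀ x y, 0 < G.p x y → α ≤ G.p x y) (hCD : G.CDInfty 0) {a b β : ℝ} (ha : 0 ≤ a)
    (hβ : ∀ x, G.gamma (u a) x ≤ β) (hhalf : ∀ t ∈ Icc a b, ∀ x, G.gamma (u t) x ≤ α / 2) :
    ∀ t ∈ Icc a b, ∀ x, G.gamma (u t) x ≤ β := by
  have hcont : ∀ x, ContinuousOn (fun t => G.gamma (u t) x - β) (Icc a b) := fun x =>
    (G.continuousOn_gamma (fun y => (hu.continuousOn_apply y).mono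
      (Icc_subset_Ici_self.trans (Ici_subset_Ici.2 ha))) x).sub continuousOn_const
  have hnonpos := nonpos_of_deriv_le_mul_upperBound two_pos hcont
    (f' := fun t x => 2 * G.gammaBil (u t) (u' t) x)
    (fun t ht x => (G.hasDerivAt_gamma (hu.hasDerivAt_apply (ha.trans_lt ht.1)) x).sub_const β)
    (fun t ht x => sub_le_sub_right (hhalf t ht x) β) (fun x => sub_nonpos.2 (hβ x))
    fun t ht x hx S hS =>
      calc 2 * G.gammaBil (u t) (u' t) x
          ≤ G.driftLap (u t) (G.gamma (u t)) x := by
            rw [hu.coe_deriv_eq (ha.trans_lt ht.1)]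
            exact hCD.two_mul_gammaBil_lap_add_gamma_le (u t) x
        _ ≤ 2 * (S + β - G.gamma (u t) x) :=
            G.driftLap_le (WeightedGraph.abs_sub_le_one_of_gamma_le hα hp
              (hhalf t (Ioo_subset_Icc_self ht) x)) fun y => sub_le_iff_le_add.1 (hS y)
        _ ≤ 2 * S := by linarith
  exact fun t ht x => sub_nonpos.1 (hnonpos t ht x)

-- Continuous induction: the bound `α / 2` needed for the maximum principle persists for a while.
theorem gamma_le (hu : IsMHESolution G u u' u₀) (hα : 0 < α)
    (hp : ∀ x y, 0 < G.p x y → α ≤ G.p x y) (hCD : G.CDInfty 0) {β : ℝ} (hβα : β < α / 2)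
    (hβ : ∀ x, G.gamma u₀ x ≤ β) {t : ℝ} (ht : 0 ≤ t) (x : V) : G.gamma (u t) x ≤ β := by
  have hclosed : IsClosed ({s | ∀ x, G.gamma (u s) x ≤ β} ∩ Icc 0 t) := by
    have : {s | ∀ x, G.gamma (u s) x ≤ β} ∩ Icc 0 t
        = Icc 0 t ∩ ⋂ x, {s ∈ Icc 0 t | G.gamma (u s) x ≤ β} := by
      ext s
      simp +contextual [and_comm]
    rw [this]
    exact isClosed_Icc.inter (isClosed_iInter fun x => isClosed_Icc.isClosed_le
      (G.continuousOn_gamma (fun y => (hu.continuousOn_apply y).mono Icc_subset_Ici_self) x)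
      continuousOn_const)
  refine hclosed.Icc_subset_of_forall_exists_gt ?_ ?_ (right_mem_Icc.2 ht) x
  · rwa [mem_ofPred_eq, hu.init]
  · rintro s ⟨hs, hs0, -⟩ c hsc
    obtain ⟨r, hsr, hr⟩ := mem_nhdsGE_iff_exists_Icc_subset.1 (hu.eventually_gamma_le hs0 hβα hs)
    have hlt : s < min c r := lt_min hsc hsr
    exact ⟨min c r, hu.gamma_le_of_gamma_le_half hα hp hCD hs0 hs
      (fun q hq => hr ⟨hq.1, hq.2.trans (min_le_right c r)⟩) _ (right_mem_Icc.2 hlt.le),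
      hlt, min_le_left c r⟩

theorem neg_lap_add_mul_lap_deriv_le (hu : IsMHESolution G u u' u₀) (hn : 0 < n) (hCD : G.CD 0 n)
    {t : ℝ} (ht : 0 < t) {x : V} (hx : n / 2 ≤ -t * G.lap (u t) x) :
    -(G.lap (u t) x + t * G.lap (u' t) x) ≤ G.driftLap (u t) (fun y => -t * G.lap (u t) y) x := by
  have hn0 : (0 : ℝ) < n := Nat.cast_pos.2 hn
  have hevol := mul_le_mul_of_nonneg_left (hCD.driftLap_lap_add_sq_le (u t) x) ht.le
  rw [← hu.coe_deriv_eq ht] at hevol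
  rw [G.driftLap_const_mul]
  set L := G.lap (u t) x
  have hL : 0 ≤ -L := by
    refine nonneg_of_mul_nonneg_right ?_ ht
    linarith
  have habsorb : -L ≤ t * (2 / n * L ^ 2) :=
    calc -L = n / 2 * (2 / n * -L) := by field_simp
      _ ≤ -t * L * (2 / n * -L) := mul_le_mul_of_nonneg_right hx (by positivity)
      _ = t * (2 / n * L ^ 2) := by ring
  linarith

theorem neg_div_le_lap (hu : IsMHESolution G u u' u₀) (hα : 0 < α)
    (hp : ∀ x y, 0 < G.p x y → α ≤ G.p x y) (hn : 0 < n) (hCD : G.CD 0 n)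
    (h0 : supNorm (G.gamma u₀) < α / 2) {t : ℝ} (ht : 0 < t) (x : V) :
    -(n / 2 / t) ≤ G.lap (u t) x := by
  obtain ⟨M, hM⟩ := hu.exists_norm_le t
  let f : ℝ → V → ℝ := fun s x => -s * G.lap (u s) x - n / 2
  let f' : ℝ → V → ℝ := fun s x => -(G.lap (u s) x + s * G.lap (u' s) x)
  have hcont : ∀ x, ContinuousOn (fun s => f s x) (Icc 0 t) := fun x =>
    (continuousOn_id.neg.mul (G.continuousOn_lap (fun y =>
      (hu.continuousOn_apply y).mono Icc_subset_Ici_self) x)).sub continuousOn_const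
  have hderiv : ∀ s ∈ Ioo 0 t, ∀ x, HasDerivAt (fun s => f s x) (f' s x) s := fun s hs x =>
    (((hasDerivAt_id s).fun_neg.fun_mul
      (G.hasDerivAt_lap (hu.hasDerivAt_apply hs.1) x)).sub_const _).congr_deriv
        (by simp only [id_eq, f']; ring)
  have hbound : ∀ s ∈ Icc 0 t, ∀ x, f s x ≤ t * (2 * M) := fun s hs x =>
    calc f s x ≤ -s * G.lap (u s) x := sub_le_self _ (by positivity)
      _ = s * -G.lap (u s) x := neg_mul_comm _ _
      _ ≤ s * (2 * ‖u s‖) := mul_le_mul_of_nonneg_left (G.neg_lap_le_two_mul_norm (u s) x) hs.1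
      _ ≤ t * (2 * M) := by gcongr; exacts [hs.2, hM s hs]
  have hinit : ∀ x, f 0 x ≤ 0 := fun x => by
    simp only [f, neg_zero, zero_mul, zero_sub]
    exact neg_nonpos.2 (by positivity)
  have hf' : ∀ s ∈ Ioo 0 t, ∀ x, 0 < f s x → ∀ S, (∀ y, f s y ≤ S) → f' s x ≤ 2 * S :=
    fun s hs x hx S hS =>
      calc f' s x ≤ G.driftLap (u s) (fun y => -s * G.lap (u s) y) x :=
            hu.neg_lap_add_mul_lap_deriv_le hn hCD hs.1 (sub_pos.1 hx).le
        _ ≤ 2 * (S + n / 2 - -s * G.lap (u s) x) :=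
            G.driftLap_le (WeightedGraph.abs_sub_le_one_of_gamma_le hα hp
              ((hu.gamma_le hα hp hCD.cdInfty h0 (G.gamma_le_supNorm u₀) hs.1.le x).trans h0.le))
              fun y => sub_le_iff_le_add.1 (hS y)
        _ ≤ 2 * S := by linarith [sub_pos.1 hx]
  have hft : f t x ≤ 0 := nonpos_of_deriv_le_mul_upperBound two_pos hcont hderiv hbound hinit hf'
    t (right_mem_Icc.2 ht.le) x
  simp only [f] at hft
  rw [neg_le, le_div_iff₀ ht]
  linarith

end IsMHESolution

theorem harnack_inequality_general {V : Type*} (G : WeightedGraph V) (α : ℝ) (n : ℕ) (hn : 0 < n)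
    (hα : 0 < α) (hp : ∀ x y, 0 < G.p x y → α ≤ G.p x y) (hCD : G.CD 0 n) (u₀ : Linf V)
    (h0 : supNorm (G.gamma (fun x => u₀ x)) < α / 2)
    (u u' : ℝ → Linf V) (hu : IsMHESolution G u u' u₀) :
    ∀ T₁ T₂ : ℝ, 0 < T₁ → T₁ < T₂ → ∀ x y : V,
      u T₁ x - u T₂ y ≤
        ((n : ℝ) / 2) * Real.log (T₂ / T₁) +
          2 * (G.dist x y : ℝ) ^ 2 / (α * (T₂ - T₁)) := by
  intro T₁ T₂ hT₁ hT x y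
  have hpos : ∀ t ∈ Icc T₁ T₂, 0 < t := fun t ht => hT₁.trans_le ht.1
  let v : ℝ → V → ℝ := fun t z => u t z + n / 2 * Real.log t
  have hv : ∀ t ∈ Icc T₁ T₂, ∀ z, HasDerivAt (fun s => v s z) (u' t z + n / 2 * t⁻¹) t :=
    fun t ht z => (hu.hasDerivAt_apply (hpos t ht) z).add
      ((Real.hasDerivAt_log (hpos t ht).ne').const_mul _)
  have hΓ : ∀ t ∈ Icc T₁ T₂, ∀ z, G.gamma (v t) z ≤ u' t z + n / 2 * t⁻¹ := fun t ht z => by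
    rw [G.gamma_add_const, hu.eqn t (hpos t ht) z, ← div_eq_mul_inv]
    linarith [hu.neg_div_le_lap hα hp hn hCD h0 (hpos t ht) z]
  have hharnack := WeightedGraph.sub_le_of_gamma_le_deriv hα hp hT hv hΓ x y
  simp only [v] at hharnack
  rw [Real.log_div (hT₁.trans hT).ne' hT₁.ne']
  linarith

/-- **Harnack inequality.** On a weighted graph with bounded geometry
(constant `α > 0`) satisfying `CD(0,n)`, if `u` solves the modified heat equation
with initial data `u₀ ∈ L^∞(V,μ)`, `‖Γ u₀‖_∞ < α/2`, then for all `0 < T₁ < T₂`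
and all `x, y ∈ V`,
`u(T₁)(x) - u(T₂)(y) ≤ (n/2) log(T₂/T₁) + 2 d(x,y)² / (α (T₂ - T₁))`. -/
theorem harnack_inequality {V : Type*} [Countable V]
    (G : WeightedGraph V) (α : ℝ) (n : ℕ) (hn : 0 < n)
    (hbg : G.BoundedGeometry α) (hCD : G.CD 0 n) (u₀ : Linf V)
    (h0 : supNorm (G.gamma (fun x => u₀ x)) < α / 2)
    (u u' : ℝ → Linf V) (hu : IsMHESolution G u u' u₀) :
    ∀ T₁ T₂ : ℝ, 0 < T₁ → T₁ < T₂ → ∀ x y : V,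
      u T₁ x - u T₂ y ≤
        ((n : ℝ) / 2) * Real.log (T₂ / T₁) +
          2 * (G.dist x y : ℝ) ^ 2 / (α * (T₂ - T₁)) :=
  harnack_inequality_general G α n hn hbg.1 hbg.2.1 hCD u₀ h0 u u' hu
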